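/- arXiv:1006.3215 — 3 statements merged into one kernel-verified Lean document; each statement's English description precedes it below -/
import Mathlib

section
/- (Non-binary substitution preserves the solution space.) Let ι be a set of variables with a domain D_i for each i ∈ ι, and let assignments be dependent functions σ with σ(i) ∈ D_i for all i. Let P and Q be constraints, i.e., predicates on assignments, and let j ∈ ι. Assume P is functional on j, meaning: whenever two assignments σ and σ' agree on every variable except possibly j and both satisfy P, then σ(j) = σ'(j). Define the substituted constraint Q' by: Q'(σ) holds iff there exists v ∈ D_j such that the assignment σ[j:=v] (σ updated to take value v at j) satisfies both P and Q. Then for every assignment σ: (P(σ) ∧ Q(σ)) if and only if (P(σ) ∧ Q'(σ)). -/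
section

variable {ι : Sort*} {D : ι → Sort*} {P Q : (∀ i, D i) → Prop} {j : ι} {σ : ∀ i, D i}

/-- The constraint `P` is functional on the variable `j`: a satisfying assignment is determined
at `j` by its values at the other variables. A value at `j` need not exist, so `P` defines only a
partial function of the other variables. -/
def FunctionalOn (P : (∀ i, D i) → Prop) (j : ι) : Prop :=
  ∀ σ σ' : ∀ i, D i, (∀ i, i ≠ j → σ i = σ' i) → P σ → P σ' → σ j = σ' j

variable [DecidableEq ι]

/-- The constraint `Q'` obtained from `Q` by substituting for the variable `j` a value permitted
by `P`. It is encoded as a constraint on all variables, although its truth does not depend on the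
value at `j`. -/
def SubstitutedConstraint (P Q : (∀ i, D i) → Prop) (j : ι) (σ : ∀ i, D i) : Prop :=
  ∃ v : D j, P (Function.update σ j v) ∧ Q (Function.update σ j v)

theorem SubstitutedConstraint.of_satisfies (hP : P σ) (hQ : Q σ) :
    SubstitutedConstraint P Q j σ :=
  ⟨σ j, by rw [Function.update_eq_self]; exact ⟨hP, hQ⟩⟩

namespace FunctionalOn

theorem update_eq_self {v : D j} (hj : FunctionalOn P j) (hσ : P σ)
    (hv : P (Function.update σ j v)) : Function.update σ j v = σ := by
  have agree_off_j (i : ι) (hi : i ≠ j) : Function.update σ j v i = σ i :=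
    Function.update_of_ne hi v σ
  have agree_at_j : Function.update σ j v j = σ j := hj _ _ agree_off_j hv hσ
  rwa [Function.update_self, ← Function.update_eq_self_iff] at agree_at_j

theorem substitutedConstraint_iff (hj : FunctionalOn P j) (hσ : P σ) :
    SubstitutedConstraint P Q j σ ↔ Q σ where
  mp := fun ⟨_, hPv, hQv⟩ => hj.update_eq_self hσ hPv ▸ hQv
  mpr := .of_satisfies hσ

end FunctionalOn

end

/-- Non-binary substitution preserves the solution space.

Assignments are dependent functions `σ : (i : ι) → D i`.  `P` is functional on the
variable `j`: any two assignments satisfying `P` that agree on all variables other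
than `j` also agree at `j`.  The substituted constraint `Q'` holds of `σ` iff there
is a value `v ∈ D j` such that `σ[j := v]` satisfies both `P` and `Q`. -/
theorem nonbinary_substitution_equiv {ι : Type*} [DecidableEq ι] (D : ι → Type*)
    (P Q : (∀ i : ι, D i) → Prop) (j : ι)
    (hP : ∀ σ σ' : ∀ i : ι, D i,
      (∀ i : ι, i ≠ j → σ i = σ' i) → P σ → P σ' → σ j = σ' j) :
    ∀ σ : ∀ i : ι, D i,
      (P σ ∧ Q σ) ↔
      (P σ ∧ ∃ v : D j, P (Function.update σ j v) ∧ Q (Function.update σ j v)) := by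
  have hj : FunctionalOn P j := hP
  exact fun σ => and_congr_right fun hσ => (hj.substitutedConstraint_iff hσ).symm
end

section
/- (An arc-consistent family of the eliminated problem extends to an arc-consistent family of the original problem.) Let D_i, D_j be domains and, for each k in an index set K, let D_k be a domain. Let c_{ij} ⊆ D_i × D_j be a binary constraint functional on its second variable, and for each k ∈ K let c_{jk} ⊆ D_j × D_k and c_{ik} ⊆ D_i × D_k be binary constraints. Define the substituted constraints c'_{ik} = c_{ik} ∩ (c_{jk} ∘ c_{ij}) for each k ∈ K. Let A ⊆ D_i and, for each k ∈ K, B_k ⊆ D_k be such that (A, B_k) is arc consistent for c'_{ik} for every k ∈ K, and assume every a ∈ A has a support in D_j under c_{ij}. Then there exists B ⊆ D_j such that: (A, B) is arc consistent for c_{ij}; for every k ∈ K, (B, B_k) is arc consistent for c_{jk}; and for every k ∈ K, (A, B_k) is arc consistent for c_{ik}. -/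
/-!
The domain eliminated with `cij` is restored as `Bj`, the image of `A` under `cij`. A value `b` of
`Bj` is related to some `a ∈ A`, and `a` has a support in `B k` through some value of `Dj`.
Functionality forces that value to be `b`, so `b` itself has a support in `B k`.
-/

/-- A binary constraint `c ⊆ A × B` is functional on its second variable if
for every `a ∈ A` there is at most one `b ∈ B` with `(a, b) ∈ c`. -/
def FunctionalOnSnd {A B : Type*} (c : Set (A × B)) : Prop :=
  ∀ (a : A) (b b' : B), (a, b) ∈ c → (a, b') ∈ c → b = b'

/-- The composition `d ∘ c` of constraints `c ⊆ A × B` and `d ⊆ B × C`. -/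
def ConstraintComp {A B C : Type*} (c : Set (A × B)) (d : Set (B × C)) : Set (A × C) :=
  {p : A × C | ∃ b : B, (p.1, b) ∈ c ∧ (b, p.2) ∈ d}

/-- `(A', B')` is arc consistent for the constraint `c ⊆ A × B`: every value of `A'`
has a support in `B'`, and every value of `B'` has a support in `A'`. -/
def ArcConsistentPair {A B : Type*} (c : Set (A × B)) (A' : Set A) (B' : Set B) : Prop :=
  (∀ a ∈ A', ∃ b ∈ B', (a, b) ∈ c) ∧ (∀ b ∈ B', ∃ a ∈ A', (a, b) ∈ c)

section

open SetRel

variable {α β γ : Type*}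

theorem arcConsistentPair_iff_subset {c : SetRel α β} {s : Set α} {t : Set β} :
    ArcConsistentPair c s t ↔ s ⊆ c.preimage t ∧ t ⊆ c.image s :=
  Iff.rfl

theorem constraintComp_eq_comp (c : SetRel α β) (d : SetRel β γ) : ConstraintComp c d = c ○ d :=
  rfl

theorem ArcConsistentPair.mono {c d : SetRel α β} {s : Set α} {t : Set β}
    (h : ArcConsistentPair c s t) (hcd : c ⊆ d) : ArcConsistentPair d s t := by
  rw [arcConsistentPair_iff_subset] at h ⊢
  exact ⟨h.1.trans (preimage_subset_preimage_left hcd), h.2.trans (image_subset_image_left hcd)⟩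

theorem arcConsistentPair_image {c : SetRel α β} {s : Set α} (hs : s ⊆ c.dom) :
    ArcConsistentPair c s (c.image s) :=
  arcConsistentPair_iff_subset.mpr
    ⟨(Set.subset_inter subset_rfl hs).trans inter_dom_subset_preimage_image, subset_rfl⟩

theorem FunctionalOnSnd.preimage_subset_core {c : SetRel α β} (hc : FunctionalOnSnd c)
    (t : Set β) : c.preimage t ⊆ c.core t := by
  rintro a ⟨b, hb, hab⟩ b' hab'
  exact hc a b b' hab hab' ▸ hb

theorem ArcConsistentPair.image_of_constraintComp {c : SetRel α β} {d : SetRel β γ} {s : Set α}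
    {u : Set γ} (h : ArcConsistentPair (ConstraintComp c d) s u) (hc : FunctionalOnSnd c) :
    ArcConsistentPair d (c.image s) u := by
  rw [constraintComp_eq_comp, arcConsistentPair_iff_subset, preimage_comp, image_comp] at h
  obtain ⟨hs, hu⟩ := h
  have hs_core : s ⊆ c.core (d.preimage u) := hs.trans (hc.preimage_subset_core _)
  exact arcConsistentPair_iff_subset.mpr ⟨image_subset_iff.mpr hs_core, hu⟩

end

/-- An arc-consistent family of the eliminated problem extends to an arc-consistent
family of the original problem. -/
theorem arc_consistent_extension {Di Dj : Type*} {K : Type*} {Dk : K → Type*}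
    (cij : Set (Di × Dj)) (cjk : ∀ k : K, Set (Dj × Dk k)) (cik : ∀ k : K, Set (Di × Dk k))
    (hfun : FunctionalOnSnd cij)
    (A : Set Di) (B : ∀ k : K, Set (Dk k))
    (hAC : ∀ k : K, ArcConsistentPair (cik k ∩ ConstraintComp cij (cjk k)) A (B k))
    (hsupp : ∀ a ∈ A, ∃ b : Dj, (a, b) ∈ cij) :
    ∃ Bj : Set Dj,
      ArcConsistentPair cij A Bj ∧
      (∀ k : K, ArcConsistentPair (cjk k) Bj (B k)) ∧
      (∀ k : K, ArcConsistentPair (cik k) A (B k)) :=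
  ⟨SetRel.image cij A, arcConsistentPair_image hsupp,
    fun k ↦ ((hAC k).mono Set.inter_subset_right).image_of_constraintComp hfun,
    fun k ↦ (hAC k).mono Set.inter_subset_left⟩
end

section
/- (Elimination does not enlarge the arc-consistency closure.) Let P be a binary CSP with variable set V, domains (D_v)_{v∈V}, and constraints c_{uv} ⊆ D_u × D_v on certain ordered pairs of distinct variables, satisfying (a,b) ∈ c_{uv} iff (b,a) ∈ c_{vu}. Let i, j ∈ V be distinct variables such that c_{ij} exists and is functional on its second variable. Let P' be the CSP obtained from P by eliminating j using c_{ij}: its variable set is V \ {j}; for each k ∉ {i,j} such that c_{jk} exists in P, the constraint between i and k in P' is c'_{ik} = c_{ik} ∩ (c_{jk} ∘ c_{ij}) (taking c_{ik} = D_i × D_k if P has no constraint between i and k); the domain of i in P' is D'_i = {a ∈ D_i | a has a support in D_j under c_{ij}}; all other domains and all constraints not involving j are unchanged. Then for every variable v ∈ V \ {j}, the arc-consistency closure of P' at v is a subset of the arc-consistency closure of P at v. -/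
/-- A subdomain family: a choice of `A v ⊆ dom v` for each variable `v`. -/
def SubdomainFamily {V : Type*} {D : V → Type*} (dom A : ∀ v : V, Set (D v)) : Prop :=
  ∀ v : V, A v ⊆ dom v

/-- A subdomain family `A` is arc consistent for the CSP with constrained pairs `cons`
and constraint relations `C`: for every constraint `c_{uv}`, every value in `A u` has a
support in `A v`. -/
def ArcConsistentFamily {V : Type*} {D : V → Type*} (cons : V → V → Prop)
    (C : ∀ u v : V, Set (D u × D v)) (A : ∀ v : V, Set (D v)) : Prop :=
  ∀ u v : V, cons u v → ∀ a ∈ A u, ∃ b ∈ A v, (a, b) ∈ C u v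

/-- The arc-consistency closure of a CSP at a variable `v`: the component at `v` of the
componentwise greatest arc-consistent subdomain family, i.e. the union of all
arc-consistent subdomain families. -/
def ACClosure {V : Type*} {D : V → Type*} (dom : ∀ v : V, Set (D v))
    (cons : V → V → Prop) (C : ∀ u v : V, Set (D u × D v)) (v : V) : Set (D v) :=
  {a : D v | ∃ A : ∀ w : V, Set (D w),
    SubdomainFamily dom A ∧ ArcConsistentFamily cons C A ∧ a ∈ A v}

/-!
An arc-consistent family `A` of the eliminated problem extends to the original one by giving `j`
the values supporting some `a ∈ A i`, that is, the image of `A i` under `c_{ij}`. A value `b` of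
`j` inherits its support at a neighbour `k ≠ i` from any such `a`: the new constraint
`c_{jk} ∘ c_{ij}` supports `a` through some value of `j`, and functionality forces that value
to be `b`.
-/

open scoped SetRel

theorem image_subset_preimage_of_rightUnique {α β γ : Type*} {R : SetRel α β} {S : SetRel β γ}
    {s : Set α} {t : Set γ} (hR : Relator.RightUnique fun a b ↦ (a, b) ∈ R)
    (hst : s ⊆ (R ○ S).preimage t) : R.image s ⊆ S.preimage t := by
  rintro b ⟨a, ha, hab⟩
  obtain ⟨c, hc, b', hab', hbc⟩ := hst ha
  obtain rfl : b = b' := hR hab hab'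
  exact ⟨c, hc, hbc⟩

section Elimination

variable {V : Type*} {D : V → Type*} {dom dom' : ∀ v, Set (D v)} {cons cons' : V → V → Prop}
  {C C' : ∀ u v, SetRel (D u) (D v)} {A : ∀ v, Set (D v)} {i j : V}

theorem ArcConsistentFamily.subset_preimage (hA : ArcConsistentFamily cons C A) {u v : V}
    (huv : cons u v) : A u ⊆ (C u v).preimage (A v) :=
  hA u v huv

theorem arcConsistentFamily_update [DecidableEq V] {B : Set (D j)} (hj : ¬ cons j j)
    (hA : ∀ u v, u ≠ j → v ≠ j → cons u v → A u ⊆ (C u v).preimage (A v))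
    (hto : ∀ u, u ≠ j → cons u j → A u ⊆ (C u j).preimage B)
    (hfrom : ∀ v, v ≠ j → cons j v → B ⊆ (C j v).preimage (A v)) :
    ArcConsistentFamily cons C (Function.update A j B) := by
  intro u v huv
  change Function.update A j B u ⊆ (C u v).preimage (Function.update A j B v)
  by_cases hu : u = j
  · subst hu
    have hv : v ≠ u := fun hvu ↦ hj (hvu ▸ huv)
    simpa only [Function.update_self, Function.update_of_ne hv] using hfrom v hv huv
  by_cases hv : v = j
  · subst hv
    simpa only [Function.update_self, Function.update_of_ne hu] using hto u hu huv
  · simpa only [Function.update_of_ne hu, Function.update_of_ne hv] using hA u v hu hv huv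

/-- The problem `(dom', cons', C')` is at least as tight, away from `j`, as the one obtained from
`(dom, cons, C)` by eliminating `j` using `C i j`. The variable `j` stays in the index type `V`,
but nothing is required of `dom' j` or of the constraints `C'` at `j`. The two orientations of a
constraint between `i` and `k` are treated separately because `C` need not be symmetric. -/
structure RefinesElimination (dom : ∀ v, Set (D v)) (cons : V → V → Prop)
    (C : ∀ u v, SetRel (D u) (D v)) (i j : V) (dom' : ∀ v, Set (D v)) (cons' : V → V → Prop)
    (C' : ∀ u v, SetRel (D u) (D v)) : Prop where
  dom_subset : ∀ v, v ≠ j → dom' v ⊆ dom v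
  dom_subset_support : dom' i ⊆ (C i j).dom
  of_cons : ∀ u v, u ≠ j → v ≠ j → cons u v → cons' u v ∧ C' u v ⊆ C u v
  of_cons_from : ∀ k, k ≠ i → k ≠ j → cons j k → cons' i k ∧ C' i k ⊆ C i j ○ C j k
  of_cons_to : ∀ k, k ≠ i → k ≠ j → cons k j → cons' k i ∧ C' k i ⊆ C k j ○ (C i j).inv

/-- The extension over an eliminated variable `j` of a subdomain family `A` of the remaining
variables: `j` receives the supports under `C i j` of the values in `A i`. -/
def extendAlong [DecidableEq V] (C : ∀ u v, SetRel (D u) (D v)) (i j : V) (A : ∀ v, Set (D v)) :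
    ∀ v, Set (D v) :=
  Function.update A j ((C i j).image (A i))

namespace RefinesElimination

theorem subdomainFamily_extendAlong [DecidableEq V]
    (h : RefinesElimination dom cons C i j dom' cons' C') (hcod : (C i j).cod ⊆ dom j)
    (hA : SubdomainFamily dom' A) : SubdomainFamily dom (extendAlong C i j A) := by
  refine (Function.forall_update_iff A fun v s ↦ s ⊆ dom v).2 ⟨?_, fun v hv ↦ ?_⟩
  · rintro b ⟨a, -, hab⟩
    exact hcod ⟨a, hab⟩
  · exact (hA v).trans (h.dom_subset v hv)

theorem subset_preimage_image (h : RefinesElimination dom cons C i j dom' cons' C')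
    (hdom : A i ⊆ dom' i) (hA : ArcConsistentFamily cons' C' A) {u : V} (hu : u ≠ j)
    (huj : cons u j) : A u ⊆ (C u j).preimage ((C i j).image (A i)) := by
  rcases eq_or_ne u i with rfl | hui
  · calc A u ⊆ A u ∩ (C u j).dom :=
          Set.subset_inter subset_rfl (hdom.trans h.dom_subset_support)
      _ ⊆ (C u j).preimage ((C u j).image (A u)) := SetRel.inter_dom_subset_preimage_image
  · obtain ⟨hcons', hC'⟩ := h.of_cons_to u hui hu huj
    calc A u ⊆ (C' u i).preimage (A i) := hA.subset_preimage hcons'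
      _ ⊆ (C u j ○ (C i j).inv).preimage (A i) := SetRel.preimage_subset_preimage_left hC'
      _ = (C u j).preimage ((C i j).image (A i)) := by
        rw [SetRel.preimage_comp, SetRel.preimage_inv]

theorem image_subset_preimage (h : RefinesElimination dom cons C i j dom' cons' C')
    (hsymm : cons j i → C i j ⊆ (C j i).inv)
    (hfun : Relator.RightUnique fun a b ↦ (a, b) ∈ C i j)
    (hA : ArcConsistentFamily cons' C' A) {v : V} (hv : v ≠ j) (hjv : cons j v) :
    (C i j).image (A i) ⊆ (C j v).preimage (A v) := by
  rcases eq_or_ne v i with rfl | hvi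
  · calc (C v j).image (A v) ⊆ (C j v).inv.image (A v) :=
          SetRel.image_subset_image_left (hsymm hjv)
      _ = (C j v).preimage (A v) := SetRel.image_inv ..
  · obtain ⟨hcons', hC'⟩ := h.of_cons_from v hvi hv hjv
    exact image_subset_preimage_of_rightUnique hfun <|
      (hA.subset_preimage hcons').trans (SetRel.preimage_subset_preimage_left hC')

theorem arcConsistentFamily_extendAlong [DecidableEq V]
    (h : RefinesElimination dom cons C i j dom' cons' C') (hj : ¬ cons j j)
    (hsymm : cons j i → C i j ⊆ (C j i).inv)
    (hfun : Relator.RightUnique fun a b ↦ (a, b) ∈ C i j)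
    (hdom : A i ⊆ dom' i) (hA : ArcConsistentFamily cons' C' A) :
    ArcConsistentFamily cons C (extendAlong C i j A) := by
  refine arcConsistentFamily_update hj (fun u v hu hv huv ↦ ?_)
    (fun u hu huj ↦ h.subset_preimage_image hdom hA hu huj)
    (fun v hv hjv ↦ h.image_subset_preimage hsymm hfun hA hv hjv)
  obtain ⟨hcons', hC'⟩ := h.of_cons u v hu hv huv
  exact (hA.subset_preimage hcons').trans (SetRel.preimage_subset_preimage_left hC')

end RefinesElimination

theorem elimination_shrinks_AC_closure_general
    (h : RefinesElimination dom cons C i j dom' cons' C') (hj : ¬ cons j j)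
    (hsymm : cons j i → C i j ⊆ (C j i).inv) (hcod : (C i j).cod ⊆ dom j)
    (hfun : Relator.RightUnique fun a b ↦ (a, b) ∈ C i j) {v : V} (hv : v ≠ j) :
    ACClosure dom' cons' C' v ⊆ ACClosure dom cons C v := by
  classical
  rintro x ⟨A, hA, hAC, hx⟩
  refine ⟨extendAlong C i j A, h.subdomainFamily_extendAlong hcod hA,
    h.arcConsistentFamily_extendAlong hj hsymm hfun (hA i) hAC, ?_⟩
  rwa [extendAlong, Function.update_of_ne hv]

end Elimination

/-- Elimination does not enlarge the arc-consistency closure.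

The original CSP `P` has variables `V`, domains `dom v` (inside ambient value types
`D v`), constrained pairs `cons`, and constraint relations `C` (symmetric, on distinct
variables, contained in the domains).  `c_{ij}` exists and is functional on `j`.

The eliminated CSP `P'` (variable set `V \ {j}`, here modelled by leaving `j`
unconstrained) is described by `dom'`, `cons'`, `C'`:
* `dom' i` keeps exactly the values of `dom i` having a support in `dom j` under
  `c_{ij}`; all other domains are unchanged;
* its constrained pairs avoid `j`, and consist of the old pairs together with the new
  pairs `(i, k)` (and `(k, i)`) for `k ∉ {i, j}` with `c_{jk}` in `P`;
* on a constrained pair, `C'` is the old constraint (or `dom u × dom v` where `P` had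
  no constraint) intersected, for the pairs involving `i` and a neighbour `k` of `j`,
  with the composition `c_{jk} ∘ c_{ij}`; constraints not involving `j` are unchanged.

Then at every variable `v ≠ j` the arc-consistency closure of `P'` is contained in that
of `P`. -/
theorem elimination_shrinks_AC_closure {V : Type*} {D : V → Type*}
    (dom : ∀ v : V, Set (D v)) (cons : V → V → Prop) (C : ∀ u v : V, Set (D u × D v))
    (hconsSymm : ∀ u v : V, cons u v → cons v u)
    (hconsNe : ∀ u v : V, cons u v → u ≠ v)
    (hCsymm : ∀ u v : V, cons u v → ∀ (a : D u) (b : D v), (a, b) ∈ C u v ↔ (b, a) ∈ C v u)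
    (hCdom : ∀ u v : V, cons u v → ∀ p ∈ C u v, p.1 ∈ dom u ∧ p.2 ∈ dom v)
    (i j : V) (hij : i ≠ j) (hconsij : cons i j)
    (hfun : ∀ (a : D i) (b b' : D j), (a, b) ∈ C i j → (a, b') ∈ C i j → b = b')
    (dom' : ∀ v : V, Set (D v))
    (hdom' : ∀ (v : V) (x : D v), x ∈ dom' v ↔
      x ∈ dom v ∧ ∀ h : v = i, ∃ b ∈ dom j, (cast (congrArg D h) x, b) ∈ C i j)
    (cons' : V → V → Prop)
    (hcons' : ∀ u v : V, cons' u v ↔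
      (u ≠ j ∧ v ≠ j ∧
        (cons u v ∨ (u = i ∧ v ≠ i ∧ cons j v) ∨ (v = i ∧ u ≠ i ∧ cons u j))))
    (C' : ∀ u v : V, Set (D u × D v))
    (hC' : ∀ (u v : V) (p : D u × D v), p ∈ C' u v ↔
      ((cons u v → p ∈ C u v) ∧
       (¬ cons u v → p.1 ∈ dom u ∧ p.2 ∈ dom v) ∧
       (∀ h : u = i, v ≠ i → cons j v →
         ∃ b : D j, (cast (congrArg D h) p.1, b) ∈ C i j ∧ (b, p.2) ∈ C j v) ∧
       (∀ h : v = i, u ≠ i → cons u j →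
         ∃ b : D j, (cast (congrArg D h) p.2, b) ∈ C i j ∧ (p.1, b) ∈ C u j))) :
    ∀ v : V, v ≠ j → ACClosure dom' cons' C' v ⊆ ACClosure dom cons C v := by
  have refines : RefinesElimination dom cons C i j dom' cons' C' :=
    { dom_subset := fun v _ x hx ↦ ((hdom' v x).1 hx).1
      dom_subset_support := fun x hx ↦ (((hdom' i x).1 hx).2 rfl).imp fun _ ↦ And.right
      of_cons := fun u v hu hv huv ↦
        ⟨(hcons' u v).2 ⟨hu, hv, .inl huv⟩, fun p hp ↦ ((hC' u v p).1 hp).1 huv⟩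
      of_cons_from := fun k hki hkj hjk ↦
        ⟨(hcons' i k).2 ⟨hij, hkj, .inr (.inl ⟨rfl, hki, hjk⟩)⟩,
          fun p hp ↦ ((hC' i k p).1 hp).2.2.1 rfl hki hjk⟩
      of_cons_to := fun k hki hkj hck ↦
        ⟨(hcons' k i).2 ⟨hkj, hij, .inr (.inr ⟨rfl, hki, hck⟩)⟩,
          fun p hp ↦ (((hC' k i p).1 hp).2.2.2 rfl hki hck).imp fun _ ↦ And.symm⟩ }
  exact fun v hv ↦ elimination_shrinks_AC_closure_general refines (fun hjj ↦ hconsNe j j hjj rfl)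
    (fun _ p hp ↦ (hCsymm i j hconsij p.1 p.2).1 hp)
    (fun b ⟨a, hab⟩ ↦ (hCdom i j hconsij (a, b) hab).2) hfun hv
end
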